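/- arXiv:2507.16133 — 3 statements merged into one kernel-verified Lean document; each statement's English description precedes it below -/
import Mathlib

section
/- Let n ≥ 2, let Λ be an n-dimensional isotropic subspace of ℂ^{2n+1}, and let q ∈ {1,…,n−1} be an integer. If dim(Λ ∩ H_{{1,…,q}}) = n−q, then dim(Λ ∩ H_{{1,…,q,q+1,(q+1)̄}}) ≤ n−q−1. -/
open scoped BigOperators

/-- Index set for the coordinates of `ℂ^{2n+1}`: `none` is the coordinate `0`,
`some (q, false)` is the coordinate `q+1 ∈ [n]`, and `some (q, true)` is the barred
coordinate `(q+1)̄ ∈ [n]̄`. -/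
abbrev Idx (n : ℕ) := Option (Fin n × Bool)

/-- The nondegenerate symmetric bilinear form
`y·z = 2 y₀ z₀ + Σ_q (y_q z_{q̄} + y_{q̄} z_q)` on `ℂ^{2n+1}`. -/
noncomputable def bform (n : ℕ) (y z : Idx n → ℂ) : ℂ :=
  2 * y none * z none +
    ∑ q : Fin n, (y (some (q, false)) * z (some (q, true)) +
      y (some (q, true)) * z (some (q, false)))

/-- A subspace is isotropic if the bilinear form vanishes identically on it. -/
def IsIsotropic (n : ℕ) (Λ : Submodule ℂ (Idx n → ℂ)) : Prop :=
  ∀ y ∈ Λ, ∀ z ∈ Λ, bform n y z = 0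

/-- `H_S`: the coordinate subspace of vectors whose coordinates indexed by `S` vanish. -/
noncomputable def coordSub (n : ℕ) (S : Set (Idx n)) : Submodule ℂ (Idx n → ℂ) where
  carrier := {v | ∀ i ∈ S, v i = 0}
  add_mem' := by
    intro a b ha hb i hi
    simp only [Pi.add_apply, ha i hi, hb i hi, add_zero]
  zero_mem' := by intro i hi; rfl
  smul_mem' := by
    intro c a ha i hi
    simp only [Pi.smul_apply, ha i hi, smul_zero]

/-- `rk_Λ(S) = n − dim(Λ ∩ H_S)`. -/
noncomputable def rk (n : ℕ) (Λ : Submodule ℂ (Idx n → ℂ)) (S : Set (Idx n)) : ℕ :=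
  n - Module.finrank ℂ ↥(Λ ⊓ coordSub n S)

/-- The set of coordinates in `[n] ∪ [n]̄` corresponding to a finite set of pairs. -/
def finIdx (n : ℕ) (S : Finset (Fin n × Bool)) : Set (Idx n) :=
  (fun p => (some p : Idx n)) '' ↑S

/-- A subset `S ⊆ [n] ∪ [n]̄` is admissible if it contains no pair `{q, q̄}`. -/
def Admissible (n : ℕ) (S : Finset (Fin n × Bool)) : Prop :=
  ∀ q : Fin n, ¬((q, false) ∈ S ∧ (q, true) ∈ S)

/-- `rk_Λ(S)` for `S ⊆ [n] ∪ [n]̄`. -/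
noncomputable def rkF (n : ℕ) (Λ : Submodule ℂ (Idx n → ℂ)) (S : Finset (Fin n × Bool)) : ℕ :=
  rk n Λ (finIdx n S)

/-- `g_Λ(S) = rk_Λ(S) − |S ∩ [n]̄|`. -/
noncomputable def gF (n : ℕ) (Λ : Submodule ℂ (Idx n → ℂ)) (S : Finset (Fin n × Bool)) : ℤ :=
  (rkF n Λ S : ℤ) - ((S.filter fun p => p.2 = true).card : ℤ)

/-- The delta-matroid `𝒟(Λ)`: maximal admissible subsets of full rank. -/
def deltaMatroid (n : ℕ) (Λ : Submodule ℂ (Idx n → ℂ)) : Set (Finset (Fin n × Bool)) :=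
  {S | Admissible n S ∧ S.card = n ∧ rkF n Λ S = n}

/-- `x(S) = Σ_{q ∈ S ∩ [n]} x_q − Σ_{q̄ ∈ S ∩ [n]̄} x_q`. -/
def xval (n : ℕ) (x : Fin n → ℝ) (S : Finset (Fin n × Bool)) : ℝ :=
  ∑ p ∈ S.filter (fun p => p.2 = false), x p.1 -
    ∑ p ∈ S.filter (fun p => p.2 = true), x p.1

/-- The polytope `𝒫(Λ)` cut out by the inequalities `x(S) ≤ g_Λ(S)` over admissible `S`. -/
def polytopeP (n : ℕ) (Λ : Submodule ℂ (Idx n → ℂ)) : Set (Fin n → ℝ) :=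
  {x | ∀ S : Finset (Fin n × Bool), Admissible n S → xval n x S ≤ (gF n Λ S : ℝ)}

/-- `χ(S')`: the 0–1 vector whose `q`-th coordinate is `1` exactly when `q ∈ S' ∩ [n]`. -/
def chi (n : ℕ) (S : Finset (Fin n × Bool)) : Fin n → ℝ :=
  fun q => if (q, false) ∈ S then 1 else 0

/-- `S₁ ⊔ S₂ = {a ∈ S₁ ∪ S₂ : ā ∉ S₁ ∪ S₂}`. -/
def sqcup (n : ℕ) (S₁ S₂ : Finset (Fin n × Bool)) : Finset (Fin n × Bool) :=
  (S₁ ∪ S₂).filter (fun p => (p.1, !p.2) ∉ S₁ ∪ S₂)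

/-!
Let `U` be the span of the basis vectors `e_s̄` with `s ∈ S`, and let `P` be the hyperbolic plane
spanned by `e_a` and `e_ā`, so that `H_S = Uᗮ` and `H_{S ∪ {a, ā}} = (U ⊔ P)ᗮ`. The condition
`dim (Λ ∩ H_S) = dim Λ - |S|` says that `U` meets `Λᗮ`, hence `Λ`, trivially. Therefore
`(Λ ∩ H_{S ∪ {a, ā}}) ⊕ U` is an isotropic subspace of `Pᗮ`, a nondegenerate space of dimension
`2n - 1`, and so it has dimension at most `n - 1`.
-/

section Orthogonal

variable {R M : Type*} [CommSemiring R] [AddCommMonoid M] [Module R M]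
  {B : LinearMap.BilinForm R M} {U W : Submodule R M}

lemma orthogonal_sup (U W : Submodule R M) :
    B.orthogonal (U ⊔ W) = B.orthogonal U ⊓ B.orthogonal W := by
  refine le_antisymm (le_inf (B.orthogonal_le le_sup_left) (B.orthogonal_le le_sup_right)) ?_
  rintro v ⟨hvU, hvW⟩ x hx
  obtain ⟨u, hu, w, hw, rfl⟩ := Submodule.mem_sup.1 hx
  rw [map_add, LinearMap.add_apply, hvU u hu, hvW w hw, add_zero]

lemma le_orthogonal_comm (hB : B.IsRefl) :
    U ≤ B.orthogonal W ↔ W ≤ B.orthogonal U :=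
  ⟨fun h _ hw _ hu => hB _ _ (h hu _ hw), fun h _ hu _ hw => hB _ _ (h hw _ hu)⟩

lemma sup_le_orthogonal_sup (hB : B.IsRefl) (hU : U ≤ B.orthogonal U)
    (hW : W ≤ B.orthogonal W) (hUW : U ≤ B.orthogonal W) :
    U ⊔ W ≤ B.orthogonal (U ⊔ W) := by
  rw [orthogonal_sup]
  exact sup_le (le_inf hU hUW) (le_inf ((le_orthogonal_comm hB).1 hUW) hW)

end Orthogonal

section FiniteDimensional

open Module

variable {K V : Type*} [Field K] [AddCommGroup V] [Module K V] [FiniteDimensional K V]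
  {B : LinearMap.BilinForm K V} {Λ U P W : Submodule K V}

lemma disjoint_orthogonal_iff_finrank_inf_orthogonal (hB : B.Nondegenerate) (hB' : B.IsRefl) :
    Disjoint (B.orthogonal Λ) U ↔
      finrank K ↥(Λ ⊓ B.orthogonal U) + finrank K U = finrank K Λ := by
  have hinf : Λ ⊓ B.orthogonal U = B.orthogonal (B.orthogonal Λ ⊔ U) := by
    rw [orthogonal_sup, LinearMap.BilinForm.orthogonal_orthogonal hB hB']
  have hdim := Submodule.finrank_sup_add_finrank_inf_eq (B.orthogonal Λ) U
  have hΛ := Submodule.finrank_le Λ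
  have hsup := Submodule.finrank_le (B.orthogonal Λ ⊔ U)
  rw [LinearMap.BilinForm.finrank_orthogonal hB] at hdim
  rw [hinf, LinearMap.BilinForm.finrank_orthogonal hB, disjoint_iff, ← Submodule.finrank_eq_zero]
  omega

lemma two_mul_finrank_add_finrank_le (hB : B.Nondegenerate) (hW : W ≤ B.orthogonal W)
    (hPW : P ≤ B.orthogonal W) (hdisj : Disjoint W P) :
    2 * finrank K W + finrank K P ≤ finrank K V := by
  have hle : finrank K ↥(W ⊔ P) ≤ finrank K (B.orthogonal W) :=
    Submodule.finrank_mono (sup_le hW hPW)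
  have hdim := Submodule.finrank_sup_add_finrank_inf_eq W P
  rw [hdisj.eq_bot, finrank_bot] at hdim
  rw [LinearMap.BilinForm.finrank_orthogonal hB] at hle
  have := Submodule.finrank_le W
  omega

theorem two_mul_finrank_inf_orthogonal_sup_add_le (hB : B.Nondegenerate) (hB' : B.IsRefl)
    (hΛ : Λ ≤ B.orthogonal Λ) (hU : U ≤ B.orthogonal U) (hUP : U ≤ B.orthogonal P)
    (hP : Disjoint P (B.orthogonal P))
    (h : finrank K ↥(Λ ⊓ B.orthogonal U) + finrank K U = finrank K Λ) :
    2 * (finrank K ↥(Λ ⊓ B.orthogonal (U ⊔ P)) + finrank K U) + finrank K P ≤ finrank K V := by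
  set M := Λ ⊓ B.orthogonal (U ⊔ P)
  have hMΛ : M ≤ Λ := inf_le_left
  have hMU : M ≤ B.orthogonal U := inf_le_right.trans (B.orthogonal_le le_sup_left)
  have hMP : M ≤ B.orthogonal P := inf_le_right.trans (B.orthogonal_le le_sup_right)
  have hdisj : Disjoint M U :=
    ((disjoint_orthogonal_iff_finrank_inf_orthogonal hB hB').2 h).mono_left (hMΛ.trans hΛ)
  have hisotropic : M ⊔ U ≤ B.orthogonal (M ⊔ U) :=
    sup_le_orthogonal_sup hB' (hMΛ.trans (hΛ.trans (B.orthogonal_le hMΛ))) hU hMU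
  have horth : M ⊔ U ≤ B.orthogonal P := sup_le hMP hUP
  have hdim := Submodule.finrank_sup_add_finrank_inf_eq M U
  rw [hdisj.eq_bot, finrank_bot, add_zero] at hdim
  rw [← hdim]
  exact two_mul_finrank_add_finrank_le hB hisotropic
    ((le_orthogonal_comm hB').1 horth) (hP.symm.mono_left horth)

end FiniteDimensional

section CoordinateForm

/-- The form `bform n` as a Mathlib bilinear form, which gives access to orthogonal complements. -/
noncomputable def bformBilin (n : ℕ) : LinearMap.BilinForm ℂ (Idx n → ℂ) :=
  let x (i : Idx n) : (Idx n → ℂ) →ₗ[ℂ] ℂ := LinearMap.proj i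
  (2 : ℂ) • LinearMap.BilinForm.linMulLin (x none) (x none) +
    ∑ q : Fin n, (LinearMap.BilinForm.linMulLin (x (some (q, false))) (x (some (q, true))) +
      LinearMap.BilinForm.linMulLin (x (some (q, true))) (x (some (q, false))))

variable {n : ℕ}

lemma bformBilin_apply (y z : Idx n → ℂ) : bformBilin n y z = bform n y z := by
  simp [bformBilin, bform, mul_assoc]

lemma bformBilin_isRefl : (bformBilin n).IsRefl := by
  intro y z h
  rw [bformBilin_apply] at h ⊢
  rw [← h]
  simp only [bform, mul_comm, mul_left_comm, add_comm]

lemma bformBilin_single_none (v : Idx n → ℂ) :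
    bformBilin n (Pi.single none 1) v = 2 * v none := by
  simp [bformBilin_apply, bform]

lemma bformBilin_single_some (p : Fin n × Bool) (v : Idx n → ℂ) :
    bformBilin n (Pi.single (some (p.1, !p.2)) 1) v = v (some p) := by
  obtain ⟨q, _ | _⟩ := p <;> simp [bformBilin_apply, bform, Pi.single_apply]

lemma bformBilin_nondegenerate : (bformBilin n).Nondegenerate := by
  refine bformBilin_isRefl.nondegenerate_iff_separatingRight.2 fun v hv => funext fun i => ?_
  rcases i with _ | p
  · simpa [bformBilin_single_none] using hv (Pi.single none 1)
  · simpa [bformBilin_single_some] using hv (Pi.single (some (p.1, !p.2)) 1)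

lemma isIsotropic_iff_le_orthogonal {Λ : Submodule ℂ (Idx n → ℂ)} :
    IsIsotropic n Λ ↔ Λ ≤ (bformBilin n).orthogonal Λ := by
  simp only [IsIsotropic, ← bformBilin_apply]
  exact forall₂_comm

/-- The span of the basis vectors `e_s̄` for `s ∈ S`, whose orthogonal complement is `H_S`. -/
noncomputable def barSpan (n : ℕ) (S : Finset (Fin n × Bool)) : Submodule ℂ (Idx n → ℂ) :=
  Submodule.span ℂ ((fun p => Pi.single (some (p.1, !p.2)) 1) '' (S : Set (Fin n × Bool)))

variable {S T : Finset (Fin n × Bool)}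

lemma barSpan_union : barSpan n (S ∪ T) = barSpan n S ⊔ barSpan n T := by
  rw [barSpan, Finset.coe_union, Set.image_union, Submodule.span_union, barSpan, barSpan]

lemma finrank_barSpan : Module.finrank ℂ (barSpan n S) = S.card := by
  have hinj : Function.Injective fun p : S => (some (p.1.1, !p.1.2) : Idx n) := by
    rintro ⟨⟨q, b⟩, _⟩ ⟨⟨r, c⟩, _⟩ h
    simpa using h
  have hli := (Pi.basisFun ℂ (Idx n)).linearIndependent.comp _ hinj
  have hspan : barSpan n S = Submodule.span ℂ (Set.range fun p : S =>
      Pi.basisFun ℂ (Idx n) (some (p.1.1, !p.1.2))) := by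
    simp only [barSpan, Set.image_eq_range, Pi.basisFun_apply, SetLike.coe_sort_coe]
  exact hspan ▸ (finrank_span_eq_card hli).trans (Fintype.card_coe S)

lemma orthogonal_barSpan :
    (bformBilin n).orthogonal (barSpan n S) = coordSub n (finIdx n S) := by
  ext v
  have hspan : v ∈ (bformBilin n).orthogonal (barSpan n S) ↔
      barSpan n S ≤ LinearMap.ker ((bformBilin n).flip v) := Iff.rfl
  have hcoord : v ∈ coordSub n (finIdx n S) ↔ ∀ p ∈ S, v (some p) = 0 :=
    Set.forall_mem_image
  rw [hspan, hcoord, barSpan, Submodule.span_le, Set.image_subset_iff]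
  exact forall₂_congr fun p _ => (bformBilin_single_some p v).congr_left

lemma barSpan_le_coordSub {I : Set (Idx n)} (h : ∀ p ∈ S, some (p.1, !p.2) ∉ I) :
    barSpan n S ≤ coordSub n I := by
  rw [barSpan, Submodule.span_le]
  rintro _ ⟨p, hp, rfl⟩ i hi
  exact Pi.single_eq_of_ne (ne_of_mem_of_not_mem hi (h p hp)) 1

lemma some_mem_finIdx {p : Fin n × Bool} : some p ∈ finIdx n S ↔ p ∈ S := by
  simp [finIdx]

lemma barSpan_le_orthogonal_barSpan (h : ∀ p ∈ S, (p.1, !p.2) ∉ T) :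
    barSpan n S ≤ (bformBilin n).orthogonal (barSpan n T) := by
  rw [orthogonal_barSpan]
  exact barSpan_le_coordSub fun p hp => some_mem_finIdx.not.2 (h p hp)

lemma disjoint_barSpan_orthogonal_barSpan (h : ∀ p ∈ S, (p.1, !p.2) ∈ T) :
    Disjoint (barSpan n S) ((bformBilin n).orthogonal (barSpan n T)) := by
  rw [orthogonal_barSpan]
  refine Submodule.disjoint_def.2 fun v hvS hvT => funext fun i => ?_
  by_cases hi : i ∈ finIdx n T
  · exact hvT i hi
  · have hle : barSpan n S ≤ coordSub n (finIdx n T)ᶜ :=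
      barSpan_le_coordSub fun p hp => not_not.2 (some_mem_finIdx.2 (h p hp))
    exact hle hvS i hi

lemma Admissible.bar_notMem (hS : Admissible n S) {p : Fin n × Bool} (hp : p ∈ S) :
    (p.1, !p.2) ∉ S := by
  obtain ⟨q, _ | _⟩ := p
  · exact fun hp' => hS q ⟨hp, hp'⟩
  · exact fun hp' => hS q ⟨hp', hp⟩

end CoordinateForm

section InitialSegment

/-- The set `{1, …, q}` of unbarred coordinates (all of `[n]` when `q > n`), the `S` to which the
general bound is applied. -/
def initialIdx (n q : ℕ) : Finset (Fin n × Bool) :=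
  (Finset.univ.filter fun i : Fin n => (i : ℕ) < q) ×ˢ {false}

lemma card_initialIdx {n q : ℕ} (hq : q ≤ n) : (initialIdx n q).card = q := by
  simp [initialIdx, Fin.card_filter_val_lt, hq]

lemma admissible_initialIdx (n q : ℕ) : Admissible n (initialIdx n q) := by
  simp [Admissible, initialIdx]

lemma finIdx_initialIdx (n q : ℕ) :
    finIdx n (initialIdx n q) = {x | ∃ i : Fin n, (i : ℕ) < q ∧ x = some (i, false)} := by
  ext x
  simp [finIdx, initialIdx, eq_comm]

lemma finIdx_initialIdx_union_pair {n q : ℕ} (hq : q < n) :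
    finIdx n (initialIdx n q ∪ {(⟨q, hq⟩, false), (⟨q, hq⟩, true)}) =
      {x : Idx n | ∃ i : Fin n, (i : ℕ) ≤ q ∧ x = some (i, false)} ∪
        {x : Idx n | ∃ i : Fin n, (i : ℕ) = q ∧ x = some (i, true)} := by
  ext x
  rcases x with _ | ⟨i, _ | _⟩ <;>
    simp [finIdx, initialIdx, Fin.eq_mk_iff_val_eq, le_iff_lt_or_eq, or_comm]

end InitialSegment

theorem stmt1_general (n : ℕ) (Λ : Submodule ℂ (Idx n → ℂ)) (hiso : IsIsotropic n Λ)
    (S : Finset (Fin n × Bool)) (hS : Admissible n S) (a : Fin n) (ha : ∀ b, (a, b) ∉ S)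
    (h : Module.finrank ℂ ↥(Λ ⊓ coordSub n (finIdx n S)) + S.card = Module.finrank ℂ Λ) :
    Module.finrank ℂ ↥(Λ ⊓ coordSub n (finIdx n (S ∪ {(a, false), (a, true)}))) + S.card + 1
      ≤ n := by
  have hU : barSpan n S ≤ (bformBilin n).orthogonal (barSpan n S) :=
    barSpan_le_orthogonal_barSpan fun _ => hS.bar_notMem
  have hUP : barSpan n S ≤ (bformBilin n).orthogonal (barSpan n {(a, false), (a, true)}) := by
    refine barSpan_le_orthogonal_barSpan fun ⟨i, b⟩ hp hpa => ?_
    obtain rfl : i = a := by simpa [← and_or_left] using hpa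
    exact ha b hp
  have hP : Disjoint (barSpan n {(a, false), (a, true)})
      ((bformBilin n).orthogonal (barSpan n {(a, false), (a, true)})) :=
    disjoint_barSpan_orthogonal_barSpan (by simp)
  have hbound := two_mul_finrank_inf_orthogonal_sup_add_le bformBilin_nondegenerate
    bformBilin_isRefl (isIsotropic_iff_le_orthogonal.1 hiso) hU hUP hP
    (by rwa [orthogonal_barSpan, finrank_barSpan])
  rw [← barSpan_union, orthogonal_barSpan, finrank_barSpan, finrank_barSpan,
    Finset.card_pair (by simp), Module.finrank_fintype_fun_eq_card] at hbound
  simp only [Fintype.card_option, Fintype.card_prod, Fintype.card_fin, Fintype.card_bool]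
    at hbound
  omega

theorem stmt1 (n q : ℕ) (hn : 2 ≤ n) (hq1 : 1 ≤ q) (hq2 : q ≤ n - 1)
    (Λ : Submodule ℂ (Idx n → ℂ)) (hiso : IsIsotropic n Λ)
    (hΛ : Module.finrank ℂ ↥Λ = n)
    (h : Module.finrank ℂ ↥(Λ ⊓ coordSub n
      {x | ∃ i : Fin n, (i : ℕ) < q ∧ x = some (i, false)}) = n - q) :
    Module.finrank ℂ ↥(Λ ⊓ coordSub n
      ({x | ∃ i : Fin n, (i : ℕ) ≤ q ∧ x = some (i, false)} ∪
        {x | ∃ i : Fin n, (i : ℕ) = q ∧ x = some (i, true)})) ≤ n - q - 1 := by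
  have hqn : q < n := by omega
  have hbound := stmt1_general n Λ hiso (initialIdx n q) (admissible_initialIdx n q) ⟨q, hqn⟩
    (by simp [initialIdx]) (by rw [finIdx_initialIdx, h, card_initialIdx hqn.le, hΛ]; omega)
  rw [finIdx_initialIdx_union_pair, card_initialIdx hqn.le] at hbound
  omega
end

section
/- Let n ≥ 2 and let Λ be an n-dimensional isotropic subspace of ℂ^{2n+1}. Then the delta-matroid 𝒟(Λ) is nonempty; that is, there exists a maximal admissible subset S ⊆ [n] ∪ [n]̄ with rk_Λ(S) = n. -/
/-!
A maximal admissible set picks one coordinate from each pair `{q, q̄}`. There are finitely many, so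
choose one, `S`, with `Λ ∩ H_S` minimal for inclusion. If `v ≠ 0` lies in `Λ ∩ H_S`, then
`v·v = 2 v₀²` gives `v₀ = 0`, so `v` has a nonzero coordinate `a` with `ā ∈ S`. Put
`S' = S - ā + a`. For `w ∈ Λ ∩ H_{S'}` all terms of `w·v = 0` vanish except `w_ā v_a`, so
`w_ā = 0`. Hence `Λ ∩ H_{S'} ⊆ Λ ∩ H_S`, strictly because `v_a ≠ 0`, which contradicts
minimality.
-/

open scoped BigOperators

section SplitForm

variable {ι R : Type*}

/-- The form `y·z = 2 y₀ z₀ + Σ_q (y_q z_{q̄} + y_{q̄} z_q)` with coefficients in any commutative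
semiring and pairs of coordinates indexed by any finite type, in the encoding of `Idx`.
`bform n` is the case `ι = Fin n`, `R = ℂ`. -/
def splitForm [Fintype ι] [CommSemiring R] (y z : Option (ι × Bool) → R) : R :=
  2 * y none * z none +
    ∑ q : ι, (y (some (q, false)) * z (some (q, true)) + y (some (q, true)) * z (some (q, false)))

/-- The coordinate subspace `H_S` of the vectors that vanish on a finite set `S` of coordinates
other than `0`. -/
def coordSubmodule (R : Type*) [CommSemiring R] (S : Finset (ι × Bool)) :
    Submodule R (Option (ι × Bool) → R) :=
  Submodule.pi (some '' (S : Set (ι × Bool))) fun _ => ⊥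

/-- The maximal admissible set that picks the coordinate `(q, f q)` from each pair `{q, q̄}`. -/
def transversal [Fintype ι] (f : ι → Bool) : Finset (ι × Bool) :=
  Finset.univ.map ⟨fun q => (q, f q), Function.LeftInverse.injective (g := Prod.fst) fun _ => rfl⟩

lemma mem_coordSubmodule [CommSemiring R] {S : Finset (ι × Bool)} {v : Option (ι × Bool) → R} :
    v ∈ coordSubmodule R S ↔ ∀ p ∈ S, v (some p) = 0 :=
  Set.forall_mem_image

variable [Fintype ι] {f : ι → Bool}

lemma mem_transversal {p : ι × Bool} : p ∈ transversal f ↔ f p.1 = p.2 := by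
  simp [transversal, Prod.ext_iff]

lemma card_transversal (f : ι → Bool) : (transversal f).card = Fintype.card ι :=
  Finset.card_map _

lemma not_pair_mem_transversal (f : ι → Bool) (q : ι) :
    ¬((q, false) ∈ transversal f ∧ (q, true) ∈ transversal f) := by
  simp [mem_transversal]

variable [CommSemiring R] {v w : Option (ι × Bool) → R}

lemma mem_coordSubmodule_transversal :
    v ∈ coordSubmodule R (transversal f) ↔ ∀ q, v (some (q, f q)) = 0 := by
  simp only [mem_coordSubmodule, mem_transversal, Prod.forall, forall_eq']

lemma splitForm_eq_sum_choice (f : ι → Bool) (y z : Option (ι × Bool) → R) :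
    splitForm y z = 2 * y none * z none +
      ∑ q, (y (some (q, f q)) * z (some (q, !f q)) + y (some (q, !f q)) * z (some (q, f q))) := by
  refine congrArg _ (Finset.sum_congr rfl fun q _ => ?_)
  cases f q
  · rfl
  · exact add_comm _ _

lemma splitForm_self_of_mem (hv : v ∈ coordSubmodule R (transversal f)) :
    splitForm v v = 2 * v none * v none := by
  rw [mem_coordSubmodule_transversal] at hv
  simp [splitForm_eq_sum_choice f, hv]

lemma splitForm_of_mem_update_of_mem [DecidableEq ι] {q : ι}
    (hw : w ∈ coordSubmodule R (transversal (Function.update f q (!f q))))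
    (hv : v ∈ coordSubmodule R (transversal f)) (hv₀ : v none = 0) :
    splitForm w v = w (some (q, f q)) * v (some (q, !f q)) := by
  rw [mem_coordSubmodule_transversal] at hv hw
  have hw_ne : ∀ p ≠ q, w (some (p, f p)) = 0 := fun p hp => by
    simpa only [Function.update_of_ne hp] using hw p
  rw [splitForm_eq_sum_choice f, Finset.sum_eq_single_of_mem q (Finset.mem_univ q)
    fun p _ hp => by simp [hv, hw_ne p hp]]
  simp [hv, hv₀]

lemma exists_apply_not_ne_zero (hv : v ∈ coordSubmodule R (transversal f)) (hv₀ : v none = 0)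
    (hne : v ≠ 0) : ∃ q, v (some (q, !f q)) ≠ 0 := by
  rw [mem_coordSubmodule_transversal] at hv
  contrapose! hne
  ext (_ | ⟨q, b⟩)
  · exact hv₀
  · obtain rfl | rfl := Bool.eq_or_eq_not b (f q)
    · exact hv q
    · exact hne q

variable [NoZeroDivisors R] {Λ : Submodule R (Option (ι × Bool) → R)}

lemma inf_coordSubmodule_update_lt [DecidableEq ι] (hiso : ∀ y ∈ Λ, ∀ z ∈ Λ, splitForm y z = 0)
    (hv : v ∈ Λ ⊓ coordSubmodule R (transversal f)) (hv₀ : v none = 0) {q : ι}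
    (hq : v (some (q, !f q)) ≠ 0) :
    Λ ⊓ coordSubmodule R (transversal (Function.update f q (!f q))) <
      Λ ⊓ coordSubmodule R (transversal f) := by
  refine SetLike.lt_iff_le_and_exists.2 ⟨fun w hw => ⟨hw.1, ?_⟩, v, hv, fun hv' => hq ?_⟩
  · have hwq : w (some (q, f q)) = 0 := by
      have h := hiso w hw.1 v hv.1
      rw [splitForm_of_mem_update_of_mem hw.2 hv.2 hv₀] at h
      exact (mul_eq_zero.1 h).resolve_right hq
    refine mem_coordSubmodule_transversal.2 fun p => ?_
    obtain rfl | hp := eq_or_ne p q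
    · exact hwq
    · simpa only [Function.update_of_ne hp] using mem_coordSubmodule_transversal.1 hw.2 p
  · simpa only [Function.update_self] using mem_coordSubmodule_transversal.1 hv'.2 q

lemma exists_inf_coordSubmodule_lt [NeZero (2 : R)]
    (hiso : ∀ y ∈ Λ, ∀ z ∈ Λ, splitForm y z = 0)
    (hf : Λ ⊓ coordSubmodule R (transversal f) ≠ ⊥) :
    ∃ g : ι → Bool, Λ ⊓ coordSubmodule R (transversal g) <
      Λ ⊓ coordSubmodule R (transversal f) := by
  classical
  obtain ⟨v, hv, hne⟩ := Submodule.exists_mem_ne_zero_of_ne_bot hf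
  have hv₀ : v none = 0 := by
    simpa [splitForm_self_of_mem hv.2, two_ne_zero] using hiso v hv.1 v hv.1
  obtain ⟨q, hq⟩ := exists_apply_not_ne_zero hv.2 hv₀ hne
  exact ⟨_, inf_coordSubmodule_update_lt hiso hv hv₀ hq⟩

theorem stmt3_general [NeZero (2 : R)] (hiso : ∀ y ∈ Λ, ∀ z ∈ Λ, splitForm y z = 0) :
    ∃ S : Finset (ι × Bool), (∀ q, ¬((q, false) ∈ S ∧ (q, true) ∈ S)) ∧
      S.card = Fintype.card ι ∧ Λ ⊓ coordSubmodule R S = ⊥ := by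
  obtain ⟨f, hf⟩ := Set.finite_univ.exists_minimalFor
    (fun f : ι → Bool => Λ ⊓ coordSubmodule R (transversal f)) Set.univ Set.univ_nonempty
  refine ⟨transversal f, not_pair_mem_transversal f, card_transversal f, ?_⟩
  by_contra hne
  obtain ⟨g, hg⟩ := exists_inf_coordSubmodule_lt hiso hne
  exact hf.not_lt (Set.mem_univ g) hg

end SplitForm

lemma coordSub_finIdx (n : ℕ) (S : Finset (Fin n × Bool)) :
    coordSub n (finIdx n S) = coordSubmodule ℂ S :=
  rfl

lemma rkF_eq_of_inf_eq_bot {n : ℕ} {Λ : Submodule ℂ (Idx n → ℂ)} {S : Finset (Fin n × Bool)}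
    (h : Λ ⊓ coordSubmodule ℂ S = ⊥) : rkF n Λ S = n := by
  rw [rkF, rk, coordSub_finIdx, h, finrank_bot, Nat.sub_zero]

theorem stmt3 (n : ℕ) (hn : 2 ≤ n)
    (Λ : Submodule ℂ (Idx n → ℂ)) (hiso : IsIsotropic n Λ)
    (hΛ : Module.finrank ℂ ↥Λ = n) :
    ∃ S : Finset (Fin n × Bool), Admissible n S ∧ S.card = n ∧ rkF n Λ S = n := by
  obtain ⟨S, hadm, hcard, hbot⟩ := stmt3_general hiso
  exact ⟨S, hadm, hcard.trans (Fintype.card_fin n), rkF_eq_of_inf_eq_bot hbot⟩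
end

section
/- Let n ≥ 2 and let Λ be an n-dimensional isotropic subspace of ℂ^{2n+1}. Then the convex hull 𝒳(Λ) in ℝⁿ of the vectors χ(S') for S' ∈ 𝒟(Λ) is contained in the polytope 𝒫(Λ). -/
open scoped BigOperators

/-!
The polytope is an intersection of half-spaces, hence convex, so it suffices to check its
inequalities at the vertices `χ(T)`, `T ∈ 𝒟(Λ)`. As `T` contains exactly one of `q, q̄` for every
`q`, one has `χ(T)(S) = |S ∩ T| - |S ∩ [n]̄|`, and the claim becomes `|S ∩ T| ≤ rk_Λ(S)`. This holds
as in a matroid: the subspace `Λ ∩ H_S` shrinks as `S` grows, its dimension dropping by at most one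
for each new element, so `rk_Λ` is monotone and `|T| = rk_Λ(T) ≤ rk_Λ(S ∪ T) ≤ rk_Λ(S) + |T \ S|`.
-/

theorem finrank_le_finrank_inf_ker_add_finrank {K V W : Type*} [DivisionRing K]
    [AddCommGroup V] [Module K V] [AddCommGroup W] [Module K W] [FiniteDimensional K W]
    (p : Submodule K V) [FiniteDimensional K p] (f : V →ₗ[K] W) :
    Module.finrank K p ≤ Module.finrank K ↥(p ⊓ LinearMap.ker f) + Module.finrank K W := by
  have hker : Module.finrank K (LinearMap.ker (f.domRestrict p)) =
      Module.finrank K ↥(p ⊓ LinearMap.ker f) := by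
    rw [LinearMap.ker_domRestrict, ← Submodule.map_comap_subtype, Submodule.finrank_map_subtype_eq]
  calc Module.finrank K p
      = Module.finrank K (LinearMap.range (f.domRestrict p)) +
          Module.finrank K (LinearMap.ker (f.domRestrict p)) :=
        (f.domRestrict p).finrank_range_add_finrank_ker.symm
    _ ≤ Module.finrank K W + Module.finrank K (LinearMap.ker (f.domRestrict p)) := by
        gcongr
        exact Submodule.finrank_le _
    _ = Module.finrank K ↥(p ⊓ LinearMap.ker f) + Module.finrank K W := by rw [hker, add_comm]

section Rank

variable {n : ℕ}

theorem coordSub_anti {S T : Set (Idx n)} (h : S ⊆ T) : coordSub n T ≤ coordSub n S :=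
  fun _ hv i hi => hv i (h hi)

theorem coordSub_union (S T : Set (Idx n)) :
    coordSub n (S ∪ T) = coordSub n S ⊓ coordSub n T :=
  SetLike.ext fun v => Set.union_subset_iff (u := {i | v i = 0})

theorem coordSub_eq_ker_funLeft (S : Set (Idx n)) :
    coordSub n S = LinearMap.ker (LinearMap.funLeft ℂ ℂ ((↑) : S → Idx n)) :=
  SetLike.ext fun _ => Subtype.forall'.trans funext_iff.symm

theorem rk_mono (Λ : Submodule ℂ (Idx n → ℂ)) {S T : Set (Idx n)} (h : S ⊆ T) :
    rk n Λ S ≤ rk n Λ T :=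
  Nat.sub_le_sub_left (Submodule.finrank_mono (inf_le_inf_left Λ (coordSub_anti h))) n

theorem rk_union_le (Λ : Submodule ℂ (Idx n → ℂ)) (S T : Set (Idx n)) :
    rk n Λ (S ∪ T) ≤ rk n Λ S + T.ncard := by
  classical
  have hdim : Module.finrank ℂ ↥(Λ ⊓ coordSub n S) ≤
      Module.finrank ℂ ↥(Λ ⊓ coordSub n (S ∪ T)) + T.ncard := by
    rw [coordSub_union, ← inf_assoc, coordSub_eq_ker_funLeft T, ← Nat.card_coe_set_eq T,
      Nat.card_eq_fintype_card, ← Module.finrank_fintype_fun_eq_card ℂ]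
    exact finrank_le_finrank_inf_ker_add_finrank _ _
  unfold rk
  omega

theorem finIdx_mono {S T : Finset (Fin n × Bool)} (h : S ⊆ T) : finIdx n S ⊆ finIdx n T :=
  Set.image_mono (Finset.coe_subset.2 h)

theorem finIdx_union (S T : Finset (Fin n × Bool)) :
    finIdx n (S ∪ T) = finIdx n S ∪ finIdx n T := by
  rw [finIdx, Finset.coe_union, Set.image_union, finIdx, finIdx]

theorem ncard_finIdx (S : Finset (Fin n × Bool)) : (finIdx n S).ncard = S.card := by
  rw [finIdx, Set.ncard_image_of_injective _ (Option.some_injective _), Set.ncard_coe_finset]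

theorem rkF_mono (Λ : Submodule ℂ (Idx n → ℂ)) {S T : Finset (Fin n × Bool)} (h : S ⊆ T) :
    rkF n Λ S ≤ rkF n Λ T :=
  rk_mono Λ (finIdx_mono h)

theorem rkF_union_le (Λ : Submodule ℂ (Idx n → ℂ)) (S T : Finset (Fin n × Bool)) :
    rkF n Λ (S ∪ T) ≤ rkF n Λ S + T.card := by
  rw [rkF, finIdx_union, ← ncard_finIdx T]
  exact rk_union_le Λ _ _

theorem card_inter_le_rkF {Λ : Submodule ℂ (Idx n → ℂ)} {T : Finset (Fin n × Bool)}
    (hT : T.card ≤ rkF n Λ T) (S : Finset (Fin n × Bool)) : (S ∩ T).card ≤ rkF n Λ S := by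
  have h : (S ∩ T).card + (T \ S).card ≤ rkF n Λ S + (T \ S).card :=
    calc (S ∩ T).card + (T \ S).card
        = T.card := by rw [Finset.inter_comm, Finset.card_inter_add_card_sdiff]
      _ ≤ rkF n Λ T := hT
      _ ≤ rkF n Λ (S ∪ T \ S) := rkF_mono Λ (by
          rw [Finset.union_sdiff_self_eq_union]
          exact Finset.subset_union_right)
      _ ≤ rkF n Λ S + (T \ S).card := rkF_union_le Λ S (T \ S)
  exact Nat.le_of_add_le_add_right h

end Rank

namespace Admissible

variable {n : ℕ} {T : Finset (Fin n × Bool)}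

theorem injOn_fst (hT : Admissible n T) :
    Set.InjOn Prod.fst (T : Set (Fin n × Bool)) := by
  rintro ⟨q, b⟩ hb ⟨_, c⟩ hc rfl
  cases b <;> cases c
  · rfl
  · exact (hT q ⟨hb, hc⟩).elim
  · exact (hT q ⟨hc, hb⟩).elim
  · rfl

theorem mem_true_iff (hT : Admissible n T) (hcard : T.card = n) (q : Fin n) :
    (q, true) ∈ T ↔ (q, false) ∉ T := by
  refine ⟨fun htrue hfalse => hT q ⟨hfalse, htrue⟩, fun hfalse => ?_⟩
  have hsurj : Set.SurjOn Prod.fst (T : Set (Fin n × Bool)) (Finset.univ : Finset (Fin n)) :=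
    Finset.surjOn_of_injOn_of_card_le _ (fun _ _ => Finset.mem_univ _) hT.injOn_fst
      (by rw [Finset.card_fin, hcard])
  obtain ⟨⟨_, b⟩, hb, rfl⟩ := hsurj (Finset.mem_univ q)
  cases b
  · exact (hfalse hb).elim
  · exact hb

theorem xval_chi (hT : Admissible n T) (hcard : T.card = n) (S : Finset (Fin n × Bool)) :
    xval n (chi n T) S =
      ((S ∩ T).card : ℝ) - ((S.filter fun p => p.2 = true).card : ℝ) := by
  have hterm : ∀ p : Fin n × Bool,
      (if p.2 = false then chi n T p.1 else 0) - (if p.2 = true then chi n T p.1 else 0) =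
        (if p ∈ T then (1 : ℝ) else 0) - (if p.2 = true then 1 else 0) := by
    rintro ⟨q, _ | _⟩
    · simp [chi]
    · by_cases hq : (q, false) ∈ T <;> simp [chi, hT.mem_true_iff hcard, hq]
  rw [← Finset.filter_mem_eq_inter, ← Finset.sum_boole, ← Finset.sum_boole,
    ← Finset.sum_sub_distrib, xval, Finset.sum_filter, Finset.sum_filter,
    ← Finset.sum_sub_distrib]
  exact Finset.sum_congr rfl fun p _ => hterm p

end Admissible

theorem isLinearMap_xval (n : ℕ) (S : Finset (Fin n × Bool)) :
    IsLinearMap ℝ fun x : Fin n → ℝ => xval n x S where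
  map_add x y := by
    simp only [xval, Pi.add_apply, Finset.sum_add_distrib]
    ring
  map_smul c x := by
    simp only [xval, Pi.smul_apply, ← Finset.smul_sum, ← smul_sub]

theorem convex_polytopeP (n : ℕ) (Λ : Submodule ℂ (Idx n → ℂ)) : Convex ℝ (polytopeP n Λ) := by
  simp only [polytopeP, Set.ofPred_forall]
  exact convex_iInter₂ fun S _ => convex_halfSpace_le (isLinearMap_xval n S) (gF n Λ S : ℝ)

theorem xval_chi_le_gF {n : ℕ} {Λ : Submodule ℂ (Idx n → ℂ)} {T : Finset (Fin n × Bool)}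
    (hT : T ∈ deltaMatroid n Λ) (S : Finset (Fin n × Bool)) :
    xval n (chi n T) S ≤ (gF n Λ S : ℝ) := by
  obtain ⟨hadm, hcard, hrk⟩ := hT
  rw [hadm.xval_chi hcard, gF, Int.cast_sub, Int.cast_natCast, Int.cast_natCast]
  gcongr
  exact card_inter_le_rkF (hcard.trans hrk.symm).le S

theorem stmt7_general (n : ℕ) (Λ : Submodule ℂ (Idx n → ℂ)) :
    convexHull ℝ (chi n '' deltaMatroid n Λ) ⊆ polytopeP n Λ := by
  refine convexHull_min ?_ (convex_polytopeP n Λ)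
  rintro _ ⟨T, hT, rfl⟩ S _
  exact xval_chi_le_gF hT S

theorem stmt7 (n : ℕ) (hn : 2 ≤ n)
    (Λ : Submodule ℂ (Idx n → ℂ)) (hiso : IsIsotropic n Λ)
    (hΛ : Module.finrank ℂ ↥Λ = n) :
    convexHull ℝ (chi n '' deltaMatroid n Λ) ⊆ polytopeP n Λ :=
  stmt7_general n Λ
end
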